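/- Let C be a quasiminimal pregeometry class, H, H' ∈ C, let G ⊆ H and G' ⊆ H' be countable closed or empty, let g : G → G' be an isomorphism, and let g ∪ f : H ⇀ H' be a partial embedding with X = dom(f) and X' = img(f) finite. If y ∈ H \ cl(X ∪ G) and y' ∈ H' \ cl(X' ∪ G'), then g ∪ f ∪ {⟨y, y'⟩} is a partial embedding. -/

import Mathlib

open FirstOrder FirstOrder.Language Set Cardinal



universe u u' v w

namespace QM

variable {L : FirstOrder.Language.{v, w}}

/-- Formulas of `L_{ω₁,ω}`: built from atomic formulas by negation, countable
conjunction (indexed by `ℕ`), and universal quantification; `α` is the type of free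
variables and `n` counts the de Bruijn bound variables. Countable disjunctions and
the existential quantifier are definable via negation. -/
inductive InfFormula (L : FirstOrder.Language.{v, w}) (α : Type u) : ℕ → Type (max u v w)
  | falsum {n : ℕ} : InfFormula L α n
  | equal {n : ℕ} (t₁ t₂ : L.Term (α ⊕ (Fin n))) : InfFormula L α n
  | rel {n l : ℕ} (R : L.Relations l) (ts : Fin l → L.Term (α ⊕ (Fin n))) : InfFormula L α n
  | not {n : ℕ} (φ : InfFormula L α n) : InfFormula L α n
  | iInf {n : ℕ} (φ : ℕ → InfFormula L α n) : InfFormula L α n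
  | all {n : ℕ} (φ : InfFormula L α (n + 1)) : InfFormula L α n

/-- Satisfaction of an `L_{ω₁,ω}`-formula in an `L`-structure `M`, given an
assignment `v` of the free variables and `xs` of the bound variables. -/
def InfFormula.Realize {M : Type u'} [L.Structure M] {α : Type u} :
    ∀ {n : ℕ}, InfFormula L α n → (α → M) → (Fin n → M) → Prop
  | _, .falsum, _, _ => False
  | _, .equal t₁ t₂, v, xs => t₁.realize (Sum.elim v xs) = t₂.realize (Sum.elim v xs)
  | _, .rel R ts, v, xs => Structure.RelMap R (fun i => (ts i).realize (Sum.elim v xs))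
  | _, .not φ, v, xs => ¬ φ.Realize v xs
  | _, .iInf φ, v, xs => ∀ i : ℕ, (φ i).Realize v xs
  | _, .all φ, v, xs => ∀ x : M, φ.Realize v (Fin.snoc xs x)

/-- An `L_{ω₁,ω}`-sentence. -/
abbrev InfSentence (L : FirstOrder.Language.{v, w}) := InfFormula L PEmpty 0

/-- Satisfaction of an `L_{ω₁,ω}`-sentence. -/
def InfSentence.RealizeS (M : Type u') [L.Structure M] (φ : InfSentence L) : Prop :=
  InfFormula.Realize (M := M) φ PEmpty.elim (fun i => i.elim0)

/-- Satisfaction of an `L_{ω₁,ω}`-formula with parameters from the set `A`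
and `m` free variables `v̄`, at the tuple `v`. -/
def InfFormula.RealizeP {M : Type u'} [L.Structure M] {A : Set M} {m : ℕ}
    (φ : InfFormula L (↥A ⊕ Fin m) 0) (v : Fin m → M) : Prop :=
  φ.Realize (Sum.elim Subtype.val v) (fun i => i.elim0)

/-- The domain of a partial map, viewed as a graph (set of pairs). -/
def pdom {H : Type*} {H' : Type*} (p : Set (H × H')) : Set H := Prod.fst '' p

/-- The image of a partial map, viewed as a graph (set of pairs). -/
def pimg {H : Type*} {H' : Type*} (p : Set (H × H')) : Set H' := Prod.snd '' p

/-- The image of a set `X` under a partial map given as a graph. -/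
def pimage {H : Type*} {H' : Type*} (p : Set (H × H')) (X : Set H) : Set H' :=
  {b | ∃ a ∈ X, (a, b) ∈ p}

/-- A partial map (given as its graph `p`) is a partial embedding if it preserves
quantifier-free first-order formulas. (This forces `p` to be the graph of an
injective partial function.) -/
def IsPartialEmbedding {H : Type u} {H' : Type u} [L.Structure H] [L.Structure H']
    (p : Set (H × H')) : Prop :=
  ∀ (n : ℕ) (φ : L.Formula (Fin n)), BoundedFormula.IsQF φ →
    ∀ (a : Fin n → H) (b : Fin n → H'), (∀ i, (a i, b i) ∈ p) →
      (φ.Realize a ↔ φ.Realize b)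

/-- A partial map is a σ-embedding if it is a partial embedding and preserves all
`L_{ω₁,ω}`-formulas with (possibly infinitely many) parameters from its domain;
equivalently `⟨M, m⟩_{m ∈ dom p} ≡_{ω₁,ω} ⟨N, p(m)⟩_{m ∈ dom p}`. -/
def IsSigmaEmbedding {H : Type u} {H' : Type u} [L.Structure H] [L.Structure H']
    (p : Set (H × H')) : Prop :=
  IsPartialEmbedding (L := L) p ∧
    ∀ (φ : InfFormula L (↥(pdom p)) 0) (b : ↥(pdom p) → H'),
      (∀ x : ↥(pdom p), ((x : H), b x) ∈ p) →
        (φ.Realize Subtype.val (fun i => i.elim0) ↔ φ.Realize b (fun i => i.elim0))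

/-- A pregeometry (combinatorial geometry) on a set. -/
structure IsPregeometry {α : Type*} (cl : Set α → Set α) : Prop where
  subset_cl : ∀ X, X ⊆ cl X
  mono : ∀ ⦃X Y : Set α⦄, X ⊆ Y → cl X ⊆ cl Y
  idem : ∀ X, cl (cl X) = cl X
  finChar : ∀ (X : Set α) (y : α), y ∈ cl X → ∃ F : Finset α, ↑F ⊆ X ∧ y ∈ cl ↑F
  exchange : ∀ (X : Set α) (a b : α), a ∈ cl (X ∪ {b}) → a ∉ cl X → b ∈ cl (X ∪ {a})

/-- A pair `⟨H, cl_H⟩` of an `L`-structure and a closure operator on it. -/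
structure QMObj (L : FirstOrder.Language.{v, w}) where
  carrier : Type u
  [str : L.Structure carrier]
  cl : Set carrier → Set carrier

attribute [instance] QMObj.str

/-- `G` is countable and closed, or empty. -/
def CCOE (H : QMObj.{u} L) (G : Set H.carrier) : Prop :=
  (G.Countable ∧ H.cl G = G) ∨ G = ∅

/-- The axioms for a class of pairs `⟨H, cl_H⟩` to be a quasiminimal pregeometry class. -/
structure IsQMClass (C : Set (QMObj.{u} L)) : Prop where
  /-- Closure under isomorphisms, transporting the closure operator. -/
  iso_closed : ∀ H ∈ C, ∀ (N : Type u) [_iN : L.Structure N] (f : H.carrier ≃[L] N),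
      (⟨N, fun X => f '' (H.cl (f ⁻¹' X))⟩ : QMObj L) ∈ C
  /-- Any two members satisfy the same quantifier-free sentences. -/
  qf_theory : ∀ H ∈ C, ∀ H' ∈ C, ∀ (φ : L.Sentence), BoundedFormula.IsQF φ →
      (H.carrier ⊨ φ ↔ H'.carrier ⊨ φ)
  /-- Each `cl_H` is a pregeometry. -/
  pregeom : ∀ H ∈ C, IsPregeometry H.cl
  /-- The closure of a finite set is countable. -/
  cl_finite_countable : ∀ H ∈ C, ∀ X : Set H.carrier, X.Finite → (H.cl X).Countable
  /-- The closure of any set is (the underlying set of) a substructure which, with the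
  restricted closure operator, is again a member of the class. -/
  cl_mem : ∀ H ∈ C, ∀ X : Set H.carrier, ∃ S : L.Substructure H.carrier,
      (S : Set H.carrier) = H.cl X ∧
      (⟨↥S, fun Y => Subtype.val ⁻¹' (H.cl (Subtype.val '' Y))⟩ : QMObj L) ∈ C
  /-- Partial embeddings preserve and reflect the closure relation. -/
  cl_embedding : ∀ H ∈ C, ∀ H' ∈ C, ∀ (p : Set (H.carrier × H'.carrier)),
      IsPartialEmbedding (L := L) p → ∀ X ⊆ pdom p, ∀ (y : H.carrier) (y' : H'.carrier),
        (y, y') ∈ p → (y ∈ H.cl X ↔ y' ∈ H'.cl (pimage p X))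
  /-- ℵ₀-homogeneity over countable closed models, part (i): an isomorphism between
  countable closed (or empty) sets extends by any pair of independent points. -/
  homogeneity₁ : ∀ H ∈ C, ∀ H' ∈ C, ∀ (g : Set (H.carrier × H'.carrier)),
      CCOE H (pdom g) → CCOE H' (pimg g) → IsPartialEmbedding (L := L) g →
      ∀ (x : H.carrier) (x' : H'.carrier), x ∉ H.cl (pdom g) → x' ∉ H'.cl (pimg g) →
        IsPartialEmbedding (L := L) (g ∪ {(x, x')})
  /-- ℵ₀-homogeneity over countable closed models, part (ii). -/
  homogeneity₂ : ∀ H ∈ C, ∀ H' ∈ C, ∀ (g f : Set (H.carrier × H'.carrier)),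
      CCOE H (pdom g) → CCOE H' (pimg g) → IsPartialEmbedding (L := L) g →
      (pdom f).Finite → IsPartialEmbedding (L := L) (g ∪ f) →
      ∀ y ∈ H.cl (pdom f ∪ pdom g), ∃ y' : H'.carrier,
        IsPartialEmbedding (L := L) (g ∪ f ∪ {(y, y')})


/-- `p` is a σ-type over `A` in `m` variables: every countable subset of `p` is
consistent with the structure, i.e. simultaneously satisfiable. -/
def IsSigmaType {M : Type u'} [L.Structure M] {A : Set M} {m : ℕ}
    (p : Set (InfFormula L (↥A ⊕ Fin m) 0)) : Prop :=
  ∀ Φ ⊆ p, Φ.Countable → ∃ v : Fin m → M, ∀ φ ∈ Φ, φ.RealizeP v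

/-- A σ-type `p` is isolated if there is a consistent `L_{ω₁,ω}`-formula `ψ(x̄)`
(possibly with parameters from `M`) such that `ψ` implies every formula of `p`. -/
def IsIsolated {M : Type u'} [L.Structure M] {A : Set M} {m : ℕ}
    (p : Set (InfFormula L (↥A ⊕ Fin m) 0)) : Prop :=
  ∃ ψ : InfFormula L (M ⊕ Fin m) 0,
    (∃ v : Fin m → M, ψ.Realize (Sum.elim id v) (fun i => i.elim0)) ∧
    ∀ φ ∈ p, ∀ v : Fin m → M, ψ.Realize (Sum.elim id v) (fun i => i.elim0) → φ.RealizeP v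

/-- A σ-type `p` is realised if some tuple satisfies every formula of `p`. -/
def IsRealized {M : Type u'} [L.Structure M] {A : Set M} {m : ℕ}
    (p : Set (InfFormula L (↥A ⊕ Fin m) 0)) : Prop :=
  ∃ v : Fin m → M, ∀ φ ∈ p, φ.RealizeP v

/-- `B` is an independent subset of the pregeometry `⟨H, cl_H⟩`. -/
def IsIndep (H : QMObj.{u} L) (B : Set H.carrier) : Prop :=
  ∀ x ∈ B, x ∉ H.cl (B \ {x})

/-- `B` is a basis of the pregeometry `⟨H, cl_H⟩`: a maximal independent subset. -/
def IsBasis (H : QMObj.{u} L) (B : Set H.carrier) : Prop :=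
  IsIndep H B ∧ ∀ B' : Set H.carrier, B ⊆ B' → IsIndep H B' → B' = B

/-- The model-theoretic algebraic closure of `X` in `M`: the set of elements
satisfying some first-order formula with parameters in `X` having finitely many
solutions. -/
def aclS (L : FirstOrder.Language.{v, w}) (M : Type u) [L.Structure M] (X : Set M) :
    Set M :=
  {y | ∃ (n : ℕ) (φ : L.BoundedFormula (Fin n) 1) (v : Fin n → M),
    (∀ i, v i ∈ X) ∧ φ.Realize v ![y] ∧ {z : M | φ.Realize v ![z]}.Finite}


theorem IsPartialEmbedding.mono' {H H' : Type u} [L.Structure H] [L.Structure H']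
    {p q : Set (H × H')} (hq : IsPartialEmbedding (L := L) q) (hpq : p ⊆ q) :
    IsPartialEmbedding (L := L) p :=
  fun n φ hφ a b h => hq n φ hφ a b (fun i => hpq (h i))

theorem IsPartialEmbedding.func {H H' : Type u} [L.Structure H] [L.Structure H']
    {p : Set (H × H')} (hp : IsPartialEmbedding (L := L) p) {a : H} {b b' : H'}
    (h1 : (a, b) ∈ p) (h2 : (a, b') ∈ p) : b = b' := by
  have := hp 2 (Term.equal (Term.var 0) (Term.var 1))
    (BoundedFormula.IsAtomic.equal _ _).isQF ![a, a] ![b, b'] (by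
      intro i; fin_cases i <;> simpa)
  simpa [Formula.realize_equal] using this

theorem IsPartialEmbedding.swap {H H' : Type u} [L.Structure H] [L.Structure H']
    {p : Set (H × H')} (hp : IsPartialEmbedding (L := L) p) :
    IsPartialEmbedding (L := L) (Prod.swap ⁻¹' p) :=
  fun n φ hφ a b h => (hp n φ hφ b a h).symm

theorem pdom_swap {A B : Type*} (p : Set (A × B)) : pdom (Prod.swap ⁻¹' p) = pimg p := by
  ext x; simp [pdom, pimg]

theorem pimg_swap {A B : Type*} (p : Set (A × B)) : pimg (Prod.swap ⁻¹' p) = pdom p := by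
  ext x; simp [pdom, pimg]

/-- One step of the back-and-forth. -/
theorem bf_step (C : Set (QMObj.{u} L))
    (hC : IsQMClass C) (H : QMObj.{u} L) (hH : H ∈ C) (H' : QMObj.{u} L) (hH' : H' ∈ C)
    (g f f' : Set (H.carrier × H'.carrier))
    (hG : CCOE H (pdom g)) (hG' : CCOE H' (pimg g))
    (hg : IsPartialEmbedding (L := L) g) (hff : f ⊆ f') (hfin : f'.Finite)
    (hgf : IsPartialEmbedding (L := L) (g ∪ f'))
    (y : H.carrier) (hy : y ∈ H.cl (pdom f ∪ pdom g)) :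
    ∃ y' ∈ H'.cl (pimg f ∪ pimg g), IsPartialEmbedding (L := L) (g ∪ f' ∪ {(y, y')}) := by
  have hsub : pdom f ∪ pdom g ⊆ pdom f' ∪ pdom g :=
    union_subset_union_left _ (image_mono hff)
  obtain ⟨y', h⟩ := hC.homogeneity₂ H hH H' hH' g f' hG hG' hg (hfin.image _) hgf y
    ((hC.pregeom H hH).mono hsub hy)
  refine ⟨y', ?_, h⟩
  have h1 : pdom f ∪ pdom g ⊆ pdom (g ∪ f' ∪ {(y, y')}) := by
    apply union_subset
    · exact image_mono fun z hz => Or.inl (Or.inr (hff hz))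
    · exact image_mono fun z hz => Or.inl (Or.inl hz)
  have h2 := (hC.cl_embedding H hH H' hH' _ h _ h1 y y' (Or.inr rfl)).1 hy
  refine (hC.pregeom H' hH').mono ?_ h2
  rintro b ⟨a, ha, hab⟩
  rcases ha with ⟨⟨a', b'⟩, hm, rfl⟩ | ⟨⟨a', b'⟩, hm, rfl⟩
  · left
    have : b = b' := h.func hab (Or.inl (Or.inr (hff hm)))
    exact ⟨_, hm, this.symm⟩
  · right
    have : b = b' := h.func hab (Or.inl (Or.inl hm))
    exact ⟨_, hm, this.symm⟩

theorem cl_countable (C : Set (QMObj.{u} L))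
    (hC : IsQMClass C) (H : QMObj.{u} L) (hH : H ∈ C) (X : Set H.carrier)
    (hX : X.Countable) : (H.cl X).Countable := by
  have h1 : {F : Set H.carrier | F.Finite ∧ F ⊆ X}.Countable :=
    Set.countable_setOf_finite_subset hX
  refine (h1.biUnion (t := fun F _ => H.cl F)
    (fun F hF => hC.cl_finite_countable H hH F hF.1)).mono ?_
  intro y hy
  obtain ⟨F, hF, hyF⟩ := (hC.pregeom H hH).finChar X y hy
  exact mem_biUnion (x := (F : Set H.carrier)) ⟨F.finite_toSet, hF⟩ hyF

theorem CCOE.countable {H : QMObj.{u} L} {G : Set H.carrier} (h : CCOE H G) : G.Countable := by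
  rcases h with h | h
  · exact h.1
  · simp [h]

/-- Given `H, H' ∈ C`, countable closed or empty `G ⊆ H`, `G' ⊆ H'`, an
isomorphism `g : G → G'` and a partial embedding `g ∪ f` with `X = dom f`, `X' = img f`
finite: if `y ∈ H \ cl(X ∪ G)` and `y' ∈ H' \ cl(X' ∪ G')`, then `g ∪ f ∪ {⟨y, y'⟩}`
is a partial embedding. -/
theorem statement_2 {L : FirstOrder.Language.{v, w}} (C : Set (QMObj.{u} L))
    (hC : IsQMClass C) (H : QMObj.{u} L) (hH : H ∈ C) (H' : QMObj.{u} L) (hH' : H' ∈ C)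
    (g f : Set (H.carrier × H'.carrier))
    (hG : CCOE H (pdom g)) (hG' : CCOE H' (pimg g))
    (hg : IsPartialEmbedding (L := L) g)
    (hgf : IsPartialEmbedding (L := L) (g ∪ f))
    (hXfin : (pdom f).Finite) (hX'fin : (pimg f).Finite)
    (y : H.carrier) (y' : H'.carrier)
    (hy : y ∉ H.cl (pdom f ∪ pdom g)) (hy' : y' ∉ H'.cl (pimg f ∪ pimg g)) :
    IsPartialEmbedding (L := L) (g ∪ f ∪ {(y, y')}) := by
  classical
  have hpg := hC.pregeom H hH
  have hpg' := hC.pregeom H' hH'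
  have hffin : f.Finite := (hXfin.prod hX'fin).subset fun z hz => ⟨⟨z, hz, rfl⟩, ⟨z, hz, rfl⟩⟩
  set A := H.cl (pdom f ∪ pdom g) with hA
  set A' := H'.cl (pimg f ∪ pimg g) with hA'
  have hAc : A.Countable := cl_countable C hC H hH _ (hXfin.countable.union hG.countable)
  have hAc' : A'.Countable := cl_countable C hC H' hH' _ (hX'fin.countable.union hG'.countable)
  let P := {p : Set (H.carrier × H'.carrier) // f ⊆ p ∧ p.Finite ∧
    IsPartialEmbedding (L := L) (g ∪ p) ∧ p ⊆ A ×ˢ A'}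
  have hfA : f ⊆ A ×ˢ A' := fun z hz =>
    ⟨hpg.subset_cl _ (Or.inl ⟨z, hz, rfl⟩), hpg'.subset_cl _ (Or.inl ⟨z, hz, rfl⟩)⟩
  let p₀ : P := ⟨f, subset_rfl, hffin, hgf, hfA⟩
  have ext : ∀ (p : P) (a : H.carrier) (b : H'.carrier), a ∈ A → b ∈ A' →
      IsPartialEmbedding (L := L) (g ∪ p.1 ∪ {(a, b)}) → ∃ q : P, p ≤ q ∧ (a, b) ∈ q.1 := by
    intro p a b ha hb h
    refine ⟨⟨p.1 ∪ {(a, b)}, p.2.1.trans subset_union_left, p.2.2.1.union (finite_singleton _),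
      by rwa [← union_assoc], union_subset p.2.2.2.2 ?_⟩, ?_, Or.inr rfl⟩
    · rintro _ rfl
      exact ⟨ha, hb⟩
    · exact (subset_union_left : p.1 ⊆ p.1 ∪ {(a, b)})
  let D1 : A → Order.Cofinal P := fun a =>
    { carrier := {p | a.1 ∈ pdom p.1}
      isCofinal := by
        intro p
        obtain ⟨b, hb, h⟩ := bf_step C hC H hH H' hH' g f p.1 hG hG' hg p.2.1 p.2.2.1
          p.2.2.2.1 a.1 a.2
        obtain ⟨q, hq, hab⟩ := ext p a.1 b a.2 hb h
        exact ⟨q, ⟨_, hab, rfl⟩, hq⟩ }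
  let D2 : A' → Order.Cofinal P := fun b =>
    { carrier := {p | b.1 ∈ pimg p.1}
      isCofinal := by
        intro p
        obtain ⟨a, ha, h⟩ := bf_step C hC H' hH' H hH (Prod.swap ⁻¹' g) (Prod.swap ⁻¹' f)
          (Prod.swap ⁻¹' p.1) (by rwa [pdom_swap]) (by rwa [pimg_swap]) hg.swap
          (preimage_mono p.2.1) (p.2.2.1.preimage Prod.swap_injective.injOn)
          p.2.2.2.1.swap b.1 (by rw [pdom_swap, pdom_swap]; exact b.2)
        rw [pimg_swap, pimg_swap] at ha
        have h' : IsPartialEmbedding (L := L) (g ∪ p.1 ∪ {(a, b.1)}) := by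
          refine h.swap.mono' ?_
          rintro z (hz | rfl)
          · exact Or.inl hz
          · exact Or.inr rfl
        obtain ⟨q, hq, hab⟩ := ext p a b.1 ha b.2 h'
        exact ⟨q, ⟨_, hab, rfl⟩, hq⟩ }
  haveI : Countable A := hAc.to_subtype
  haveI : Countable A' := hAc'.to_subtype
  letI : Encodable (A ⊕ A') := Encodable.ofCountable _
  let I := Order.idealOfCofinals p₀ (Sum.elim D1 D2)
  have hIne : p₀ ∈ I := Order.mem_idealOfCofinals p₀ _
  have hmeet := Order.cofinal_meets_idealOfCofinals p₀ (Sum.elim D1 D2)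
  let h : Set (H.carrier × H'.carrier) := {z | ∃ p ∈ I, z ∈ g ∪ p.1}
  have hgA : g ⊆ A ×ˢ A' := fun z hz =>
    ⟨hpg.subset_cl _ (Or.inr ⟨z, hz, rfl⟩), hpg'.subset_cl _ (Or.inr ⟨z, hz, rfl⟩)⟩
  have hhA : h ⊆ A ×ˢ A' := by
    rintro z ⟨p, -, hz | hz⟩
    · exact hgA hz
    · exact p.2.2.2.2 hz
  have hh : IsPartialEmbedding (L := L) h := by
    intro n φ hφ a b hab
    choose q hqI hq using hab
    have key : ∀ s : Finset (Fin n), ∃ r ∈ I, ∀ i ∈ s, q i ≤ r := by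
      intro s
      induction s using Finset.induction_on with
      | empty => exact ⟨p₀, hIne, by simp⟩
      | insert i s _ ih =>
        obtain ⟨r, hr, hs⟩ := ih
        obtain ⟨t, ht, h1, h2⟩ := I.directed _ hr _ (hqI i)
        refine ⟨t, ht, fun j hj => ?_⟩
        rcases Finset.mem_insert.1 hj with rfl | hj
        · exact h2
        · exact (hs j hj).trans h1
    obtain ⟨r, -, hr⟩ := key Finset.univ
    refine r.2.2.2.1 n φ hφ a b fun i => ?_
    rcases hq i with hz | hz
    · exact Or.inl hz
    · exact Or.inr (hr i (Finset.mem_univ _) hz)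
  have hd : pdom h = A := by
    apply Subset.antisymm
    · rintro _ ⟨z, hz, rfl⟩
      exact (hhA hz).1
    · intro a ha
      obtain ⟨p, ⟨z, hz, hza⟩, hpI⟩ := hmeet (Sum.inl ⟨a, ha⟩)
      exact ⟨z, ⟨p, hpI, Or.inr hz⟩, hza⟩
  have hi : pimg h = A' := by
    apply Subset.antisymm
    · rintro _ ⟨z, hz, rfl⟩
      exact (hhA hz).2
    · intro a ha
      obtain ⟨p, ⟨z, hz, hza⟩, hpI⟩ := hmeet (Sum.inr ⟨a, ha⟩)
      exact ⟨z, ⟨p, hpI, Or.inr hz⟩, hza⟩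
  have fin := hC.homogeneity₁ H hH H' hH' h
    (by rw [hd]; exact Or.inl ⟨hAc, hpg.idem _⟩)
    (by rw [hi]; exact Or.inl ⟨hAc', hpg'.idem _⟩) hh y y'
    (by rw [hd, hA, hpg.idem]; exact hy) (by rw [hi, hA', hpg'.idem]; exact hy')
  refine fin.mono' (union_subset_union_left _ ?_)
  exact fun z hz => ⟨p₀, hIne, hz⟩

end QM
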